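/- arXiv:1312.1382 — 4 statements merged into one kernel-verified Lean document; each statement's English description precedes it below -/
import Mathlib

section
/- Let G = (V,E) be a finite simple undirected graph on n ≥ 2 vertices with at least one edge, let β > 1 be a real number, and set γ = β·α(G). Suppose an orientation D of G satisfies the following invariant: for every vertex w, the number of valid outgoing edges of w is at least min{d⁺(w), γ}. Then the maximum out-degree satisfies Δ ≤ β·α(G) + ⌈log_β n⌉. -/
open Finset

structure GraphOrientation {V : Type*} [Fintype V] [DecidableEq V] (G : SimpleGraph V) where
  dir : V → V → Bool
  dir_iff : ∀ u v, G.Adj u v ↔ (dir u v ∨ dir v u)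
  asymm : ∀ u v, dir u v → ¬ dir v u

namespace GraphOrientation
variable {V : Type*} [Fintype V] [DecidableEq V] {G : SimpleGraph V}

/-- The out-degree of `u` under orientation `D`. -/
def outDeg (D : GraphOrientation G) (u : V) : ℕ :=
  (Finset.univ.filter fun v => D.dir u v).card

/-- The maximum out-degree `Δ` of the orientation. -/
def maxOutDeg (D : GraphOrientation G) : ℕ :=
  Finset.univ.sup D.outDeg

/-- The edge oriented `u → v` is valid: `d⁺(u) ≤ d⁺(v) + 1`. -/
def Valid (D : GraphOrientation G) (u v : V) : Prop :=
  D.dir u v ∧ D.outDeg u ≤ D.outDeg v + 1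

instance (D : GraphOrientation G) (u : V) : DecidablePred (D.Valid u) := by
  unfold Valid; infer_instance

end GraphOrientation

/-- The set `E(U)` of edges of `G` with both endpoints in `U`. -/
def edgesIn {V : Type*} [Fintype V] [DecidableEq V] (G : SimpleGraph V)
    [DecidableRel G.Adj] (U : Finset V) : Finset (Sym2 V) :=
  G.edgeFinset ∩ U.sym2

/-- The arboricity `α(G) = max_{U ⊆ V, |U| ≥ 2} ⌈|E(U)|/(|U|-1)⌉`. -/
def arboricity {V : Type*} [Fintype V] [DecidableEq V] (G : SimpleGraph V)
    [DecidableRel G.Adj] : ℕ :=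
  Finset.univ.sup fun U : Finset V =>
    if 2 ≤ U.card then ⌈((edgesIn G U).card : ℚ) / ((U.card : ℚ) - 1)⌉₊ else 0

/-! Let `L t` be the set of vertices of out-degree at least `t`. A valid edge leaving `L (t + 1)`
ends in `L t`, so it is an edge inside `L t`. If `γ ≤ t + 1`, then each vertex of `L (t + 1)` has at
least `γ = β α(G)` valid out-edges, hence `β α(G) |L (t + 1)| ≤ |E(L t)| ≤ α(G) |L t|`. The levels
therefore grow by a factor `β` at each step down from `Δ` to `⌊γ⌋`, and since they have at most `n`
vertices, `Δ - ⌊γ⌋ ≤ log_β n`. -/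

section Arboricity

variable {V : Type*} [Fintype V] [DecidableEq V] {G : SimpleGraph V} [DecidableRel G.Adj]

lemma mk_mem_edgesIn {U : Finset V} {u v : V} :
    s(u, v) ∈ edgesIn G U ↔ G.Adj u v ∧ u ∈ U ∧ v ∈ U := by
  simp [edgesIn]

variable (G)

lemma edgesIn_eq_empty_of_card_le_one {U : Finset V} (hU : #U ≤ 1) : edgesIn G U = ∅ := by
  refine eq_empty_of_forall_notMem (Sym2.ind fun u v huv => ?_)
  obtain ⟨hadj, hu, hv⟩ := mk_mem_edgesIn.1 huv
  exact hadj.ne (card_le_one.1 hU u hu v hv)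

lemma card_edgesIn_le_arboricity_mul (U : Finset V) :
    #(edgesIn G U) ≤ arboricity G * (#U - 1) := by
  rcases le_or_gt #U 1 with hU | hU
  · simp [edgesIn_eq_empty_of_card_le_one G hU]
  · have hceil : ⌈(#(edgesIn G U) : ℚ) / ((#U : ℚ) - 1)⌉₊ ≤ arboricity G :=
      (if_pos hU).ge.trans <| le_sup (f := fun W : Finset V =>
        if 2 ≤ #W then ⌈(#(edgesIn G W) : ℚ) / ((#W : ℚ) - 1)⌉₊ else 0) (mem_univ U)
    have hpos : (0 : ℚ) < (#U : ℚ) - 1 := sub_pos.2 (mod_cast hU)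
    have hle := (div_le_iff₀ hpos).1 (Nat.ceil_le.1 hceil)
    rw [← Nat.cast_pred (by lia)] at hle
    exact_mod_cast hle

lemma arboricity_pos (hE : G.edgeSet.Nonempty) : 0 < arboricity G := by
  obtain ⟨e, he⟩ := hE
  have hmem : e ∈ edgesIn G univ := by simpa [edgesIn] using he
  exact Nat.pos_of_mul_pos_right
    ((card_pos.2 ⟨e, hmem⟩).trans_le (card_edgesIn_le_arboricity_mul G univ))

end Arboricity

namespace GraphOrientation

variable {V : Type*} [Fintype V] [DecidableEq V] {G : SimpleGraph V} (D : GraphOrientation G)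

lemma sum_card_dir_eq_card_edgesIn [DecidableRel G.Adj] (U : Finset V) :
    ∑ u ∈ U, #{v ∈ U | D.dir u v} = #(edgesIn G U) := by
  rw [← card_sigma]
  refine card_nbij (fun a => s(a.1, a.2)) ?_ ?_ ?_
  · rintro ⟨u, v⟩ huv
    simp only [mem_coe, mem_sigma, mem_filter] at huv
    obtain ⟨hu, hv, hdir⟩ := huv
    exact mk_mem_edgesIn.2 ⟨(D.dir_iff u v).2 (.inl hdir), hu, hv⟩
  · rintro ⟨u, v⟩ huv ⟨x, y⟩ hxy heq
    simp only [mem_coe, mem_sigma, mem_filter] at huv hxy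
    obtain ⟨rfl, rfl⟩ | ⟨rfl, rfl⟩ := Sym2.eq_iff.1 heq
    · rfl
    · exact absurd hxy.2.2 (D.asymm _ _ huv.2.2)
  · refine Sym2.ind fun u v huv => ?_
    obtain ⟨hadj, hu, hv⟩ := mk_mem_edgesIn.1 huv
    rcases (D.dir_iff u v).1 hadj with hdir | hdir
    · exact ⟨⟨u, v⟩, by simp [hu, hv, hdir], rfl⟩
    · exact ⟨⟨v, u⟩, by simp [hu, hv, hdir], Sym2.eq_swap⟩

/-- The vertices of out-degree at least `t`. -/
def level (t : ℕ) : Finset V := {v | t ≤ D.outDeg v}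

/-- The invariant on the orientation, for a threshold `γ`: every vertex `w` has at least
`min {d⁺(w), γ}` valid out-edges. -/
def SatisfiesInvariant (γ : ℝ) : Prop :=
  ∀ w, min (D.outDeg w : ℝ) γ ≤ #{v | D.Valid w v}

variable {D}

@[simp]
lemma mem_level {t : ℕ} {v : V} : v ∈ D.level t ↔ t ≤ D.outDeg v := by
  simp [level]

lemma level_antitone : Antitone D.level :=
  fun _ _ hst _ hv => mem_level.2 (hst.trans (mem_level.1 hv))

lemma level_nonempty [Nonempty V] {t : ℕ} (ht : t ≤ D.maxOutDeg) : (D.level t).Nonempty := by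
  obtain ⟨v, -, hv⟩ := exists_mem_eq_sup univ univ_nonempty D.outDeg
  exact ⟨v, mem_level.2 (ht.trans hv.le)⟩

lemma Valid.mem_level {u v : V} {t : ℕ} (huv : D.Valid u v) (hu : u ∈ D.level (t + 1)) :
    v ∈ D.level t :=
  GraphOrientation.mem_level.2 <|
    Nat.succ_le_succ_iff.1 ((GraphOrientation.mem_level.1 hu).trans huv.2)

lemma sum_card_valid_le_card_edgesIn [DecidableRel G.Adj] (t : ℕ) :
    ∑ u ∈ D.level (t + 1), #{v | D.Valid u v} ≤ #(edgesIn G (D.level t)) :=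
  calc ∑ u ∈ D.level (t + 1), #{v | D.Valid u v}
      ≤ ∑ u ∈ D.level (t + 1), #{v ∈ D.level t | D.dir u v} :=
        sum_le_sum fun u hu => card_le_card fun v hv => by
          have huv : D.Valid u v := (mem_filter.1 hv).2
          exact mem_filter.2 ⟨huv.mem_level hu, huv.1⟩
    _ ≤ ∑ u ∈ D.level t, #{v ∈ D.level t | D.dir u v} :=
        sum_le_sum_of_subset (level_antitone t.le_succ)
    _ = #(edgesIn G (D.level t)) := D.sum_card_dir_eq_card_edgesIn _

namespace SatisfiesInvariant

variable [DecidableRel G.Adj] {t : ℕ}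

lemma mul_card_level_succ_le_card_edgesIn {γ : ℝ} (hD : D.SatisfiesInvariant γ)
    (ht : γ ≤ t + 1) :
    γ * #(D.level (t + 1)) ≤ #(edgesIn G (D.level t)) := by
  have hvalid : ∀ u ∈ D.level (t + 1), γ ≤ #{v | D.Valid u v} := fun u hu => by
    have hdeg : γ ≤ D.outDeg u := ht.trans (mod_cast mem_level.1 hu)
    simpa only [min_eq_right hdeg] using hD u
  calc γ * #(D.level (t + 1))
      = #(D.level (t + 1)) • γ := by rw [nsmul_eq_mul, mul_comm]
    _ ≤ ∑ u ∈ D.level (t + 1), (#{v | D.Valid u v} : ℝ) := card_nsmul_le_sum _ _ _ hvalid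
    _ ≤ #(edgesIn G (D.level t)) := mod_cast sum_card_valid_le_card_edgesIn t

variable {β : ℝ}

lemma mul_card_level_succ_le (hE : G.edgeSet.Nonempty)
    (hD : D.SatisfiesInvariant (β * arboricity G)) (ht : β * arboricity G ≤ t + 1) :
    β * #(D.level (t + 1)) ≤ #(D.level t) := by
  have hα : (0 : ℝ) < arboricity G := mod_cast arboricity_pos G hE
  have hedges : #(edgesIn G (D.level t)) ≤ arboricity G * #(D.level t) :=
    (card_edgesIn_le_arboricity_mul G _).trans (Nat.mul_le_mul_left _ (Nat.sub_le _ _))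
  refine le_of_mul_le_mul_left ?_ hα
  calc (arboricity G : ℝ) * (β * #(D.level (t + 1)))
      = β * arboricity G * #(D.level (t + 1)) := by ring
    _ ≤ #(edgesIn G (D.level t)) := hD.mul_card_level_succ_le_card_edgesIn ht
    _ ≤ arboricity G * #(D.level t) := mod_cast hedges

lemma pow_mul_card_level_add_le (hE : G.edgeSet.Nonempty) (hβ : 0 ≤ β)
    (hD : D.SatisfiesInvariant (β * arboricity G)) (ht : β * arboricity G ≤ t + 1) (i : ℕ) :
    β ^ i * #(D.level (t + i)) ≤ #(D.level t) := by
  induction i with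
  | zero => simp
  | succ i ih =>
    have hti : β * arboricity G ≤ (t + i : ℕ) + 1 := by push_cast; linarith
    calc β ^ (i + 1) * #(D.level (t + i + 1))
        = β ^ i * (β * #(D.level (t + i + 1))) := by ring
      _ ≤ β ^ i * #(D.level (t + i)) := by gcongr; exact hD.mul_card_level_succ_le hE hti
      _ ≤ #(D.level t) := ih

lemma pow_le_card (hE : G.edgeSet.Nonempty) (hβ : 0 ≤ β)
    (hD : D.SatisfiesInvariant (β * arboricity G)) (ht : β * arboricity G ≤ t + 1) {i : ℕ}
    (hi : t + i ≤ D.maxOutDeg) :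
    β ^ i ≤ Fintype.card V := by
  have : Nonempty V := ⟨hE.some.out.1⟩
  have htop : (1 : ℝ) ≤ #(D.level (t + i)) := mod_cast (level_nonempty hi).card_pos
  calc β ^ i ≤ β ^ i * #(D.level (t + i)) := le_mul_of_one_le_right (by positivity) htop
    _ ≤ #(D.level t) := hD.pow_mul_card_level_add_le hE hβ ht i
    _ ≤ Fintype.card V := mod_cast card_le_univ _

lemma maxOutDeg_le_add_logb (hE : G.edgeSet.Nonempty) (hβ : 1 < β)
    (hD : D.SatisfiesInvariant (β * arboricity G)) :
    (D.maxOutDeg : ℝ) ≤ β * arboricity G + Real.logb β (Fintype.card V) := by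
  have : Nonempty V := ⟨hE.some.out.1⟩
  have hβ₀ : 0 < β := one_pos.trans hβ
  have hcard : (1 : ℝ) ≤ Fintype.card V := mod_cast Fintype.card_pos
  have hfloor : (⌊β * arboricity G⌋₊ : ℝ) ≤ β * arboricity G := Nat.floor_le (by positivity)
  rcases le_total D.maxOutDeg ⌊β * arboricity G⌋₊ with hΔ | hΔ
  · exact le_add_of_le_of_nonneg ((Nat.cast_le.2 hΔ).trans hfloor) (Real.logb_nonneg hβ hcard)
  · obtain ⟨i, hi⟩ := Nat.exists_eq_add_of_le hΔ
    have hpow : β ^ i ≤ Fintype.card V :=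
      hD.pow_le_card hE hβ₀.le (Nat.lt_floor_add_one _).le hi.ge
    have hlog : (i : ℝ) ≤ Real.logb β (Fintype.card V) :=
      (Real.le_logb_iff_rpow_le hβ (one_pos.trans_le hcard)).2 (by rwa [Real.rpow_natCast])
    calc (D.maxOutDeg : ℝ) = ⌊β * arboricity G⌋₊ + i := mod_cast hi
      _ ≤ β * arboricity G + Real.logb β (Fintype.card V) := add_le_add hfloor hlog

end SatisfiesInvariant

end GraphOrientation

/-- If for every vertex `w` at least `min{d⁺(w), γ}` (with `γ = β·α(G)`)
of the outgoing edges of `w` are valid, then `Δ ≤ β·α(G) + ⌈log_β n⌉`. -/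
theorem max_outDeg_le_of_invariant {V : Type*} [Fintype V] [DecidableEq V]
    (G : SimpleGraph V) [DecidableRel G.Adj]
    (hn : 2 ≤ Fintype.card V) (hE : G.edgeSet.Nonempty)
    (β : ℝ) (hβ : 1 < β) (D : GraphOrientation G)
    (hinv : ∀ w : V,
      min (D.outDeg w : ℝ) (β * arboricity G) ≤
        ((Finset.univ.filter fun v => D.Valid w v).card : ℝ)) :
    (D.maxOutDeg : ℝ) ≤ β * arboricity G + ⌈Real.logb β (Fintype.card V)⌉ := by
  have hD : D.SatisfiesInvariant (β * arboricity G) := hinv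
  exact (hD.maxOutDeg_le_add_logb hE hβ).trans (add_le_add_right (Int.le_ceil _) _)
end

section
/- Every finite simple undirected graph G admits an orientation in which every edge is valid, i.e., an orientation such that every edge oriented u→v satisfies d⁺(u) ≤ d⁺(v) + 1. -/
open Finset

/-!
Among all orientations of `G`, take one minimising the sum of the squared out-degrees. If some edge
`u → v` had `d⁺(u) > d⁺(v) + 1`, reversing it would move one unit of out-degree from `u` to `v`
without overshooting, which strictly decreases the sum of squares.
-/

section Transfer

variable {ι R : Type*} [CommSemiring R] [PartialOrder R] [IsStrictOrderedRing R]

theorem sq_add_add_sq_lt_add_sq_add_sq {a b d : R} (hd : 0 < d) (h : b < a) :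
    a ^ 2 + (b + d) ^ 2 < (a + d) ^ 2 + b ^ 2 :=
  calc
    a ^ 2 + (b + d) ^ 2 = a ^ 2 + b ^ 2 + d ^ 2 + 2 * d * b := by ring
    _ < a ^ 2 + b ^ 2 + d ^ 2 + 2 * d * a := by gcongr
    _ = (a + d) ^ 2 + b ^ 2 := by ring

theorem sum_sq_lt_sum_sq_of_transfer [Fintype ι] {f g : ι → R} {i j : ι} {d : R}
    (hij : i ≠ j) (hd : 0 < d) (hi : f i = g i + d) (hj : g j = f j + d) (h : f j < g i)
    (hne : ∀ k, k ≠ i → k ≠ j → g k = f k) :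
    ∑ k, g k ^ 2 < ∑ k, f k ^ 2 := by
  classical
  have hrest : ∑ k ∈ ({i, j} : Finset ι)ᶜ, g k ^ 2 = ∑ k ∈ ({i, j} : Finset ι)ᶜ, f k ^ 2 :=
    sum_congr rfl fun k hk => by
      obtain ⟨hki, hkj⟩ : k ≠ i ∧ k ≠ j := by simpa using hk
      rw [hne k hki hkj]
  rw [← sum_add_sum_compl {i, j} (g · ^ 2), ← sum_add_sum_compl {i, j} (f · ^ 2), hrest,
    sum_pair hij, sum_pair hij, hi, hj]
  gcongr ?_ + _
  exact sq_add_add_sq_lt_add_sq_add_sq hd h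

end Transfer

namespace GraphOrientation
variable {V : Type*} [Fintype V] [DecidableEq V] {G : SimpleGraph V}

open Classical in
/-- The orientation of `G` that directs each edge along the relation `r`, such as a strict linear
order. -/
noncomputable def ofRel (G : SimpleGraph V) (r : V → V → Prop) [Std.Asymm r]
    [Std.Trichotomous r] : GraphOrientation G where
  dir u v := decide (G.Adj u v ∧ r u v)
  dir_iff u v := by
    have htotal (h : G.Adj u v) : r u v ∨ r v u := by
      by_contra! hr
      exact h.ne (Std.Trichotomous.trichotomous u v hr.1 hr.2)
    simp only [decide_eq_true_eq, G.adj_comm v u]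
    tauto
  asymm u v := by
    simp only [decide_eq_true_eq]
    exact fun huv hvu => Std.Asymm.asymm u v huv.2 hvu.2

instance : Nonempty (GraphOrientation G) :=
  ⟨ofRel G WellOrderingRel⟩

/-- The orientation obtained from `D` by reversing the edge `e`; it equals `D` if `e` is not an
edge of `G`. -/
def flip (D : GraphOrientation G) (e : Sym2 V) : GraphOrientation G where
  dir u v := if s(u, v) = e then D.dir v u else D.dir u v
  dir_iff u v := by
    rw [Sym2.eq_swap (a := v), D.dir_iff]
    split_ifs
    · exact or_comm
    · rfl
  asymm u v := by
    rw [Sym2.eq_swap (a := v)]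
    split_ifs
    · exact D.asymm v u
    · exact D.asymm u v

/-- The set of heads of the edges leaving `u`, whose cardinality is the out-degree of `u`. -/
def outNeighborFinset (D : GraphOrientation G) (u : V) : Finset V :=
  univ.filter fun v => D.dir u v

/-- The sum of the squared out-degrees: the potential that reversing an invalid edge decreases. -/
def sumSqOutDeg (D : GraphOrientation G) : ℕ :=
  ∑ w, D.outDeg w ^ 2

variable (D : GraphOrientation G) {u v w : V}

@[simp]
theorem mem_outNeighborFinset : v ∈ D.outNeighborFinset u ↔ D.dir u v := by
  simp [outNeighborFinset]

theorem card_outNeighborFinset : #(D.outNeighborFinset u) = D.outDeg u :=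
  rfl

variable {D} in
theorem ne_of_dir (huv : D.dir u v) : u ≠ v :=
  ((D.dir_iff u v).2 (.inl huv)).ne

theorem outNeighborFinset_flip_tail (huv : D.dir u v) :
    (D.flip s(u, v)).outNeighborFinset u = (D.outNeighborFinset u).erase v := by
  ext w
  by_cases hw : w = v
  · simpa [flip, hw] using D.asymm u v huv
  · simp [flip, hw, ne_of_dir huv]

theorem outNeighborFinset_flip_head (huv : D.dir u v) :
    (D.flip s(u, v)).outNeighborFinset v = insert u (D.outNeighborFinset v) := by
  ext w
  by_cases hw : w = u
  · simpa [flip, hw] using huv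
  · simp [flip, hw, (ne_of_dir huv).symm]

theorem outDeg_flip_tail_add_one (huv : D.dir u v) :
    (D.flip s(u, v)).outDeg u + 1 = D.outDeg u := by
  rw [← card_outNeighborFinset, D.outNeighborFinset_flip_tail huv,
    card_erase_add_one (by simpa using huv), card_outNeighborFinset]

theorem outDeg_flip_head (huv : D.dir u v) :
    (D.flip s(u, v)).outDeg v = D.outDeg v + 1 := by
  rw [← card_outNeighborFinset, D.outNeighborFinset_flip_head huv,
    card_insert_of_notMem (by simpa using D.asymm u v huv), card_outNeighborFinset]

theorem outDeg_flip_of_notMem {e : Sym2 V} (hw : w ∉ e) : (D.flip e).outDeg w = D.outDeg w := by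
  have hne (x : V) : s(w, x) ≠ e := fun h => hw (h ▸ Sym2.mem_mk_left w x)
  simp [outDeg, flip, hne]

theorem sumSqOutDeg_flip_lt (huv : D.dir u v) (h : D.outDeg v + 1 < D.outDeg u) :
    (D.flip s(u, v)).sumSqOutDeg < D.sumSqOutDeg := by
  have htail := D.outDeg_flip_tail_add_one huv
  exact sum_sq_lt_sum_sq_of_transfer (ne_of_dir huv) one_pos htail.symm (D.outDeg_flip_head huv)
    (by lia) fun w hwu hwv => D.outDeg_flip_of_notMem (by simp [hwu, hwv])

variable {D} in
theorem outDeg_le_outDeg_add_one_of_forall_sumSqOutDeg_le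
    (hD : ∀ D' : GraphOrientation G, D.sumSqOutDeg ≤ D'.sumSqOutDeg) (huv : D.dir u v) :
    D.outDeg u ≤ D.outDeg v + 1 := by
  by_contra! hinvalid
  exact (hD (D.flip s(u, v))).not_gt (D.sumSqOutDeg_flip_lt huv hinvalid)

end GraphOrientation

/-- Every finite simple graph admits an orientation in which every edge
is valid, i.e. every edge oriented `u → v` satisfies `d⁺(u) ≤ d⁺(v) + 1`. -/
theorem exists_orientation_all_valid {V : Type*} [Fintype V] [DecidableEq V]
    (G : SimpleGraph V) :
    ∃ D : GraphOrientation G, ∀ u v : V, D.dir u v → D.outDeg u ≤ D.outDeg v + 1 := by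
  obtain ⟨D, hD⟩ : ∃ D : GraphOrientation G, ∀ D' : GraphOrientation G,
      D.sumSqOutDeg ≤ D'.sumSqOutDeg :=
    ⟨Function.argmin GraphOrientation.sumSqOutDeg,
      fun D' => Function.argmin_le GraphOrientation.sumSqOutDeg D'⟩
  exact ⟨D, fun _ _ => GraphOrientation.outDeg_le_outDeg_add_one_of_forall_sumSqOutDeg_le hD⟩
end

section
/- Let D be an orientation of a finite simple graph G in which every edge is valid, let u, v be distinct vertices with {u,v} ∉ E and d⁺_D(u) ≤ d⁺_D(v), and let D' be the orientation of G + {u,v} that agrees with D on E and orients the new edge as u→v. Then the new edge u→v is valid in D', and every edge of G + {u,v} that is violated in D' is oriented out of u. -/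
open Finset

/-!
Inserting the arc `u → v` raises the out-degree of `u` by one and leaves every other out-degree
unchanged. A valid arc `a → b` can therefore only become violated if its tail is `u`, since a larger
out-degree at its head `b` does no harm; and `d⁺(u) ≤ d⁺(v)` leaves exactly the room needed for the
new arc to be valid.
-/

namespace GraphOrientation
variable {V : Type*} [Fintype V] [DecidableEq V] {G H : SimpleGraph V} {u v a b : V}

/-- `D'` is obtained from `D` by inserting the new arc `u → v`. The two orientations may belong to
different graphs, so this compares their arcs only. -/
structure IsArcInsertion (D : GraphOrientation G) (D' : GraphOrientation H) (u v : V) : Prop where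
  not_dir : ¬ D.dir u v
  dir_iff : ∀ a b, D'.dir a b ↔ D.dir a b ∨ a = u ∧ b = v

theorem adj_of_dir {D : GraphOrientation G} (h : D.dir a b) : G.Adj a b :=
  (D.dir_iff a b).2 (Or.inl h)

theorem isArcInsertion_of_sup_edge {D : GraphOrientation G}
    {D' : GraphOrientation (G ⊔ SimpleGraph.edge u v)} (hne : ¬ G.Adj u v)
    (hagree : ∀ a b : V, G.Adj a b → D'.dir a b = D.dir a b) (hnew : D'.dir u v) :
    IsArcInsertion D D' u v where
  not_dir h := hne (adj_of_dir h)
  dir_iff a b := by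
    constructor
    · intro h
      have hadj : G.Adj a b ∨ (SimpleGraph.edge u v).Adj a b := adj_of_dir h
      rw [SimpleGraph.edge_adj] at hadj
      rcases hadj with hG | ⟨⟨rfl, rfl⟩ | ⟨rfl, rfl⟩, -⟩
      · exact Or.inl (hagree a b hG ▸ h)
      · exact Or.inr ⟨rfl, rfl⟩
      · exact absurd h (D'.asymm _ _ hnew)
    · rintro (h | ⟨rfl, rfl⟩)
      · rwa [hagree a b (adj_of_dir h)]
      · exact hnew

namespace IsArcInsertion
variable {D : GraphOrientation G} {D' : GraphOrientation H}

theorem outDeg_tail (h : IsArcInsertion D D' u v) : D'.outDeg u = D.outDeg u + 1 := by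
  have hv : v ∉ ({b | D.dir u b} : Finset V) := by simpa using h.not_dir
  have hinsert : ({b | D'.dir u b} : Finset V) = insert v ({b | D.dir u b} : Finset V) := by
    ext b
    simp [h.dir_iff, or_comm]
  rw [outDeg, outDeg, hinsert, Finset.card_insert_of_notMem hv]

theorem outDeg_of_ne (h : IsArcInsertion D D' u v) (ha : a ≠ u) : D'.outDeg a = D.outDeg a := by
  simp [outDeg, h.dir_iff, ha]

theorem outDeg_le (h : IsArcInsertion D D' u v) (a : V) : D.outDeg a ≤ D'.outDeg a := by
  obtain rfl | ha := eq_or_ne a u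
  · exact h.outDeg_tail ▸ Nat.le_succ _
  · exact (h.outDeg_of_ne ha).ge

theorem valid_new (h : IsArcInsertion D D' u v) (hdeg : D.outDeg u ≤ D.outDeg v) :
    D'.Valid u v := by
  refine ⟨(h.dir_iff u v).2 (Or.inr ⟨rfl, rfl⟩), ?_⟩
  calc D'.outDeg u = D.outDeg u + 1 := h.outDeg_tail
    _ ≤ D.outDeg v + 1 := by gcongr
    _ ≤ D'.outDeg v + 1 := by gcongr; exact h.outDeg_le v

theorem valid_of_ne (h : IsArcInsertion D D' u v) (hab : D.Valid a b) (ha : a ≠ u) :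
    D'.Valid a b := by
  refine ⟨(h.dir_iff a b).2 (Or.inl hab.1), ?_⟩
  calc D'.outDeg a = D.outDeg a := h.outDeg_of_ne ha
    _ ≤ D.outDeg b + 1 := hab.2
    _ ≤ D'.outDeg b + 1 := by gcongr; exact h.outDeg_le b

end IsArcInsertion

end GraphOrientation

/-- Insert a non-edge `{u,v}` (with `d⁺(u) ≤ d⁺(v)`) into a graph all of
whose edges are valid, orienting it `u → v`. Then the new edge `u → v` is valid in the new
orientation `D'`, and every violated edge of `D'` is oriented out of `u`. -/
theorem insert_new_valid_and_violated_out_of_u {V : Type*} [Fintype V] [DecidableEq V]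
    (G : SimpleGraph V) (u v : V) (huv : u ≠ v) (hne : ¬ G.Adj u v)
    (D : GraphOrientation G)
    (hvalid : ∀ a b : V, D.dir a b → D.outDeg a ≤ D.outDeg b + 1)
    (hdeg : D.outDeg u ≤ D.outDeg v)
    (D' : GraphOrientation (G ⊔ SimpleGraph.edge u v))
    (hagree : ∀ a b : V, G.Adj a b → D'.dir a b = D.dir a b)
    (hnew : D'.dir u v) :
    D'.outDeg u ≤ D'.outDeg v + 1 ∧
      ∀ a b : V, D'.dir a b → ¬ D'.outDeg a ≤ D'.outDeg b + 1 → a = u := by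
  have hins := GraphOrientation.isArcInsertion_of_sup_edge hne hagree hnew
  refine ⟨(hins.valid_new hdeg).2, fun a b hab hviolated => ?_⟩
  by_contra ha
  have hD : D.dir a b := ((hins.dir_iff a b).1 hab).resolve_right fun h => ha h.1
  exact hviolated (hins.valid_of_ne ⟨hD, hvalid a b hD⟩ ha).2
end

section
/- Let D be an orientation of a finite simple graph G in which every edge is valid, let {u,v} ∈ E be an edge oriented u→v in D, and let D' be the orientation of G − {u,v} obtained by restricting D. Then every edge of G − {u,v} that is violated in D' is oriented into u. -/
open Finset

/-!
Restricting an orientation to a subgraph can only lower out-degrees, so a valid edge `a → b` can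
become violated only when its head `b` loses an out-edge. Deleting the single edge `u → v` takes
an out-edge away from `u` alone.
-/

namespace GraphOrientation

variable {V : Type*} [Fintype V] [DecidableEq V] {G H : SimpleGraph V}
  {D : GraphOrientation G} {D' : GraphOrientation H} {a b c d : V}

theorem adj_of_dir_s12 (hab : D.dir a b) : G.Adj a b :=
  (D.dir_iff a b).2 (.inl hab)

theorem eq_and_eq_of_dir_of_sym2_eq (hab : D.dir a b) (hcd : D.dir c d)
    (h : s(a, b) = s(c, d)) : a = c ∧ b = d := by
  rcases Sym2.eq_iff.1 h with hsame | ⟨rfl, rfl⟩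
  · exact hsame
  · exact absurd hcd (D.asymm _ _ hab)

theorem outDeg_le_outDeg (h : ∀ x, D.dir a x → D'.dir b x) : D.outDeg a ≤ D'.outDeg b :=
  card_le_card (monotone_filter_right _ fun x _ => h x)

/-- The orientation `D'` of `H` is the restriction of the orientation `D` of `G`. The inclusion
`H ≤ G` is not a separate clause: an edge of `H` is directed by `D'`, hence by `D`. -/
def IsRestriction (D' : GraphOrientation H) (D : GraphOrientation G) : Prop :=
  ∀ a b, H.Adj a b → D'.dir a b = D.dir a b

namespace IsRestriction

theorem dir_iff (hD : D'.IsRestriction D) : D'.dir a b ↔ D.dir a b ∧ H.Adj a b where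
  mp hab := ⟨hD a b (adj_of_dir_s12 hab) ▸ hab, adj_of_dir_s12 hab⟩
  mpr hab := (hD a b hab.2).symm ▸ hab.1

theorem outDeg_le (hD : D'.IsRestriction D) (a : V) : D'.outDeg a ≤ D.outDeg a :=
  outDeg_le_outDeg fun _ hax => (hD.dir_iff.1 hax).1

theorem outDeg_eq (hD : D'.IsRestriction D) (ha : ∀ x, D.dir a x → H.Adj a x) :
    D'.outDeg a = D.outDeg a :=
  (hD.outDeg_le a).antisymm (outDeg_le_outDeg fun x hax => hD.dir_iff.2 ⟨hax, ha x hax⟩)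

theorem valid (hD : D'.IsRestriction D) (hab : D.Valid a b) (hadj : H.Adj a b)
    (hb : ∀ x, D.dir b x → H.Adj b x) : D'.Valid a b where
  left := hD.dir_iff.2 ⟨hab.1, hadj⟩
  right :=
    calc D'.outDeg a ≤ D.outDeg a := hD.outDeg_le a
      _ ≤ D.outDeg b + 1 := hab.2
      _ = D'.outDeg b + 1 := by rw [hD.outDeg_eq hb]

end IsRestriction

theorem deleteEdges_adj_of_dir_of_ne (hab : D.dir a b) (hcd : D.dir c d) (hac : a ≠ c) :
    (G.deleteEdges {s(c, d)}).Adj a b :=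
  SimpleGraph.deleteEdges_adj.2
    ⟨adj_of_dir_s12 hab, fun h => hac (eq_and_eq_of_dir_of_sym2_eq hab hcd h).1⟩

end GraphOrientation

/-- Delete an edge `{u,v}` oriented `u → v` from a graph all of whose
edges are valid, restricting the orientation. Then every edge violated in the restricted
orientation `D'` is oriented into `u`. -/
theorem delete_violated_into_u {V : Type*} [Fintype V] [DecidableEq V]
    (G : SimpleGraph V) (u v : V) (hadj : G.Adj u v)
    (D : GraphOrientation G)
    (hvalid : ∀ a b : V, D.dir a b → D.outDeg a ≤ D.outDeg b + 1)
    (hdir : D.dir u v)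
    (D' : GraphOrientation (G.deleteEdges {s(u, v)}))
    (hagree : ∀ a b : V, (G.deleteEdges {s(u, v)}).Adj a b → D'.dir a b = D.dir a b) :
    ∀ a b : V, D'.dir a b → ¬ D'.outDeg a ≤ D'.outDeg b + 1 → b = u := by
  intro a b hab hviolated
  by_contra hbu
  have hD : D'.IsRestriction D := hagree
  have hab_dir : D.dir a b := (hD.dir_iff.1 hab).1
  have hb : ∀ x, D.dir b x → (G.deleteEdges {s(u, v)}).Adj b x := fun _ hbx =>
    GraphOrientation.deleteEdges_adj_of_dir_of_ne hbx hdir hbu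
  have hvalid' : D'.Valid a b :=
    hD.valid ⟨hab_dir, hvalid a b hab_dir⟩ (GraphOrientation.adj_of_dir_s12 hab) hb
  exact hviolated hvalid'.2
end
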